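/- Let t > 0 and G^t(x,y) = (1/(2π)) e^{-y} K_0(√((x+t)²+y²)). Then ∫_0^1 f^t(s) ds = 8 ∫_{R^2_+} (∂_x G^t)² dx dy > 0, where f^t is defined on [0,1] by f^t(u^t(0,y)) = -∂_x u^t(0,y) = 2(∂_y G^t + 2G^t)(0,y), and u^t(0,·) is the strictly decreasing trace of the explicit front with u^t(0,-∞)=1, u^t(0,+∞)=0. -/

import Mathlib

open MeasureTheory Real Set Filter intervalIntegral

/-- The modified Bessel function of the second kind of order `0`. -/
noncomputable def K0 (r : ℝ) : ℝ := ∫ s in Set.Ioi (0 : ℝ), Real.exp (-(r * Real.cosh s))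

/-- The modified Bessel function of the second kind of order `1`. -/
noncomputable def K1 (r : ℝ) : ℝ :=
  ∫ s in Set.Ioi (0 : ℝ), Real.exp (-(r * Real.cosh s)) * Real.cosh s

/-- `G^t(x,y) = (1/(2π)) e^{-y} K₀(√((x+t)²+y²))`. -/
noncomputable def Gt (t x y : ℝ) : ℝ :=
  (1 / (2 * π)) * Real.exp (-y) * K0 (Real.sqrt ((x + t) ^ 2 + y ^ 2))

/-- The kernel `P^t(x,y) = -2 ∂_x G^t`. -/
noncomputable def Pt (t x y : ℝ) : ℝ :=
  Real.exp (-y) * ((x + t) / (π * Real.sqrt ((x + t) ^ 2 + y ^ 2))) *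
    K1 (Real.sqrt ((x + t) ^ 2 + y ^ 2))

/-- The explicit front `u^t(x,y) = ∫_y^∞ P^t(x,z) dz`. -/
noncomputable def ut (t x y : ℝ) : ℝ := ∫ z in Set.Ioi y, Pt t x z

/-!
Write `w = 2πG⁰ = e^{-y} K₀(√(x² + y²))`, so that `2πG^t(x, y) = w(x + t, y)`, and put `A = ∂ₓw`,
`B = ∂_y w + 2w`. The equation `Δw + 2∂_y w = 0` says `∂ₓA = -∂_y B`, and `∂_y A = ∂ₓB - 2A`, whence
`∂ₓ(AB) = ∂_y((A² - B²)/2) + 2A²`. Integrating over vertical lines, `J(x) = ∫ AB dy` satisfies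
`J'(x) = 2 ∫ A² dy`, and `J → 0` at infinity, so `-J(t) = 2 ∫_{x > t} ∫ A²`. On the other hand
`∂_y u^t(0, ·) = A(t, ·)/π` and `f^t(u^t(0, ·)) = B(t, ·)/π`, so the substitution `s = u^t(0, y)`
turns `∫₀¹ f^t` into `-J(t)/π²`.

As `y → -∞` the factor `e^{-y}` cancels the exponential decay of the Bessel functions, and `A`, `B`
decay only algebraically: the estimates rest on `A², B² = O(1/R)` with `R = √(x² + y²)`, improved by
the factor `x/R` in `A`. The limit `J → 0` comes from the rescaling `y = xv`, under which the
integrand is dominated by `(1 + v²)⁻¹`.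
-/

open scoped Topology

section Integrals

lemma integral_pos_of_ae_pos {α : Type*} [MeasurableSpace α] {μ : Measure α} [NeZero μ]
    {g : α → ℝ} (hg : Integrable g μ) (hpos : ∀ᵐ a ∂μ, 0 < g a) : 0 < ∫ a, g a ∂μ := by
  have hnonneg : 0 ≤ᵐ[μ] g := hpos.mono fun _ h => h.le
  refine (integral_nonneg_of_ae hnonneg).lt_of_ne' fun hzero => ?_
  obtain ⟨a, ha, ha'⟩ :=
    (((integral_eq_zero_iff_of_nonneg_ae hnonneg hg).1 hzero).and hpos).exists
  exact ha'.ne' ha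

lemma integral_Ioi_comp_add_right {E : Type*} [NormedAddCommGroup E] [NormedSpace ℝ E]
    (g : ℝ → E) (a t : ℝ) : ∫ x in Ioi a, g (x + t) = ∫ x in Ioi (a + t), g x := by
  have := (measurePreserving_add_right volume t).setIntegral_preimage_emb
    (measurableEmbedding_addRight t) g (Ioi (a + t))
  simpa using this

lemma hasDerivAt_integral_Ioi {E : Type*} [NormedAddCommGroup E] [NormedSpace ℝ E]
    [CompleteSpace E] {g : ℝ → E} (hg : Continuous g) (hint : ∀ a, IntegrableOn g (Ioi a))
    (y : ℝ) : HasDerivAt (fun y => ∫ z in Ioi y, g z) (-g y) y := by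
  have hsplit : (fun y => ∫ z in Ioi y, g z) = fun y => (∫ z in Ioi 0, g z) - ∫ z in 0..y, g z :=
    funext fun y => eq_sub_of_add_eq' (integral_interval_add_Ioi (hint 0) (hint y))
  rw [hsplit]
  exact (integral_hasDerivAt_right (hg.intervalIntegrable 0 y)
    (hg.stronglyMeasurableAtFilter _ _) hg.continuousAt).const_sub _

lemma range_ae_eq_Ioc_of_antitone {u : ℝ → ℝ} {a b : ℝ} (hu : Antitone u) (hcont : Continuous u)
    (hbot : Tendsto u atBot (𝓝 b)) (htop : Tendsto u atTop (𝓝 a)) :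
    range u =ᵐ[volume] Ioc a b := by
  have hsub : range u ⊆ Icc a b :=
    range_subset_iff.2 fun y => ⟨hu.le_of_tendsto htop y, hu.ge_of_tendsto hbot y⟩
  have hsup : Ioo a b ⊆ range u := fun s hs =>
    mem_range_of_exists_le_of_exists_ge hcont
      ((htop.eventually_lt_const hs.1).exists.imp fun _ => le_of_lt)
      ((hbot.eventually_const_lt hs.2).exists.imp fun _ => le_of_lt)
  exact (hsub.eventuallyLE.trans_eq Ioc_ae_eq_Icc.symm).antisymm
    (Ioo_ae_eq_Ioc.symm.trans_le hsup.eventuallyLE)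

lemma intervalIntegral_eq_integral_comp_of_antitone {E : Type*} [NormedAddCommGroup E]
    [NormedSpace ℝ E] {u u' : ℝ → ℝ} {a b : ℝ} (hu : Antitone u)
    (hderiv : ∀ y, HasDerivAt u (u' y) y) (hbot : Tendsto u atBot (𝓝 b))
    (htop : Tendsto u atTop (𝓝 a)) (g : ℝ → E) :
    ∫ s in a..b, g s = ∫ y, (-u' y) • g (u y) := by
  have hab : a ≤ b := (hu.le_of_tendsto htop 0).trans (hu.ge_of_tendsto hbot 0)
  have hcont : Continuous u :=
    continuous_iff_continuousAt.2 fun y => (hderiv y).continuousAt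
  rw [intervalIntegral.integral_of_le hab,
    ← setIntegral_congr_set (range_ae_eq_Ioc_of_antitone hu hcont hbot htop), ← image_univ,
    integral_image_eq_integral_deriv_smul_of_antitoneOn MeasurableSet.univ
      (fun y _ => (hderiv y).hasDerivWithinAt) (hu.antitoneOn univ), setIntegral_univ]

lemma integrable_inv_sq_add_sq {a : ℝ} (ha : a ≠ 0) :
    Integrable fun y : ℝ => (a ^ 2 + y ^ 2)⁻¹ := by
  refine ((integrable_inv_one_add_sq.comp_div ha).const_mul (a ^ 2)⁻¹).congr
    (ae_of_all _ fun y => ?_)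
  have : a ^ 2 + y ^ 2 = a ^ 2 * (1 + (y / a) ^ 2) := by field_simp
  simp only [this, mul_inv]

end Integrals

section CoshMoment

lemma one_add_sq_div_two_le_cosh (s : ℝ) : 1 + s ^ 2 / 2 ≤ cosh s := by
  have hpartial := sum_le_hasSum (Finset.range 2)
    (fun n _ => by have := (even_two_mul n).pow_nonneg s; positivity) (Real.hasSum_cosh s)
  simpa [Finset.sum_range_succ] using hpartial

/-- The integrand of `coshMoment`. -/
noncomputable def coshWeight (n : ℕ) (r s : ℝ) : ℝ := exp (-(r * cosh s)) * cosh s ^ n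

/-- The moments `∫₀^∞ e^{-r cosh s} coshⁿ s ds`, that is `(-1)ⁿ` times the `n`-th derivative of the
Bessel function `K₀`. -/
noncomputable def coshMoment (n : ℕ) (r : ℝ) : ℝ := ∫ s in Ioi (0 : ℝ), coshWeight n r s

lemma K0_eq_coshMoment (r : ℝ) : K0 r = coshMoment 0 r := by simp [K0, coshMoment, coshWeight]

lemma K1_eq_coshMoment (r : ℝ) : K1 r = coshMoment 1 r := by simp [K1, coshMoment, coshWeight]

lemma coshWeight_pos (n : ℕ) (r s : ℝ) : 0 < coshWeight n r s :=
  mul_pos (exp_pos _) (pow_pos (cosh_pos s) n)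

lemma continuous_coshWeight (n : ℕ) (r : ℝ) : Continuous (coshWeight n r) := by
  have := continuous_cosh
  unfold coshWeight
  fun_prop

lemma coshWeight_le_succ (n : ℕ) (r s : ℝ) : coshWeight n r s ≤ coshWeight (n + 1) r s :=
  mul_le_mul_of_nonneg_left (pow_le_pow_right₀ (one_le_cosh s) n.le_succ) (exp_pos _).le

lemma coshWeight_antitone (n : ℕ) (s : ℝ) : Antitone fun r => coshWeight n r s := by
  intro r r' hr
  have := cosh_pos s
  dsimp only [coshWeight]
  gcongr

lemma exists_coshWeight_le_gaussian (n : ℕ) {a : ℝ} (ha : 0 < a) :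
    ∃ C : ℝ, ∀ r, a ≤ r → ∀ s, coshWeight n r s ≤ C * exp (-r) * exp (-(r / 4) * s ^ 2) := by
  refine ⟨n.factorial / (a / 2) ^ n * exp (a / 2), fun r hr s => ?_⟩
  have hcosh := one_add_sq_div_two_le_cosh s
  have := cosh_pos s
  have hpow : cosh s ^ n ≤ n.factorial / (a / 2) ^ n * exp (a / 2 * cosh s) := by
    have := pow_div_factorial_le_exp (a / 2 * cosh s) (by positivity) n
    rw [div_le_iff₀ (by positivity), mul_pow] at this
    rw [div_mul_eq_mul_div, le_div_iff₀ (by positivity)]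
    linarith
  have hexponent : -(r * cosh s) + a / 2 * cosh s ≤ a / 2 + -r + -(r / 4) * s ^ 2 := by
    nlinarith [mul_le_mul_of_nonneg_left hcosh (by linarith : 0 ≤ r - a / 2),
      mul_nonneg (by linarith : 0 ≤ r / 2 - a / 2) (sq_nonneg s)]
  calc coshWeight n r s
      ≤ exp (-(r * cosh s)) * (n.factorial / (a / 2) ^ n * exp (a / 2 * cosh s)) :=
        mul_le_mul_of_nonneg_left hpow (exp_pos _).le
    _ = n.factorial / (a / 2) ^ n * exp (-(r * cosh s) + a / 2 * cosh s) := by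
        rw [exp_add]; ring
    _ ≤ n.factorial / (a / 2) ^ n * exp (a / 2 + -r + -(r / 4) * s ^ 2) := by gcongr
    _ = _ := by rw [exp_add, exp_add]; ring

variable {r : ℝ}

lemma integrableOn_coshWeight (n : ℕ) (hr : 0 < r) : IntegrableOn (coshWeight n r) (Ioi 0) := by
  obtain ⟨C, hC⟩ := exists_coshWeight_le_gaussian n hr
  refine (((integrable_exp_neg_mul_sq (by positivity : 0 < r / 4)).const_mul
    (C * exp (-r))).mono' (continuous_coshWeight n r).aestronglyMeasurable
    (ae_of_all _ fun s => ?_)).integrableOn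
  rw [norm_of_nonneg (coshWeight_pos n r s).le]
  exact hC r le_rfl s

lemma tendsto_coshWeight_atTop (n : ℕ) (hr : 0 < r) :
    Tendsto (coshWeight n r) atTop (𝓝 0) := by
  obtain ⟨C, hC⟩ := exists_coshWeight_le_gaussian n hr
  have hgauss : Tendsto (fun s : ℝ => exp (-(r / 4) * s ^ 2)) atTop (𝓝 0) :=
    tendsto_exp_atBot.comp ((tendsto_pow_atTop two_ne_zero).const_mul_atTop_of_neg (by linarith))
  exact squeeze_zero (fun s => (coshWeight_pos n r s).le) (hC r le_rfl)
    (by simpa using hgauss.const_mul (C * exp (-r)))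

lemma exists_coshMoment_le (n : ℕ) {a : ℝ} (ha : 0 < a) :
    ∃ C : ℝ, ∀ r, a ≤ r → coshMoment n r ≤ C * exp (-r) / √r := by
  obtain ⟨C, hC⟩ := exists_coshWeight_le_gaussian n ha
  refine ⟨C * √π, fun r hr => ?_⟩
  have hr0 : 0 < r := ha.trans_le hr
  have hgauss : √(π / (r / 4)) / 2 = √π / √r := by
    rw [show π / (r / 4) = 2 ^ 2 * (π / r) by field_simp; norm_num, sqrt_mul (by positivity),
      sqrt_sq zero_le_two, sqrt_div pi_pos.le]
    ring
  calc coshMoment n r ≤ ∫ s in Ioi (0 : ℝ), C * exp (-r) * exp (-(r / 4) * s ^ 2) :=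
        setIntegral_mono (integrableOn_coshWeight n hr0)
          ((integrable_exp_neg_mul_sq (by positivity)).const_mul _).integrableOn (hC r hr)
    _ = C * exp (-r) * (√π / √r) := by
        rw [MeasureTheory.integral_const_mul, integral_gaussian_Ioi, hgauss]
    _ = _ := by ring

lemma coshMoment_pos (n : ℕ) (hr : 0 < r) : 0 < coshMoment n r :=
  have : NeZero (volume.restrict (Ioi (0 : ℝ))) := ⟨by simp⟩
  integral_pos_of_ae_pos (integrableOn_coshWeight n hr) (ae_of_all _ (coshWeight_pos n r))

lemma coshMoment_le_succ (n : ℕ) (hr : 0 < r) : coshMoment n r ≤ coshMoment (n + 1) r :=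
  setIntegral_mono (integrableOn_coshWeight n hr) (integrableOn_coshWeight (n + 1) hr)
    (coshWeight_le_succ n r)

lemma coshMoment_antitoneOn (n : ℕ) : AntitoneOn (coshMoment n) (Ioi 0) :=
  fun _ hr _ hr' hle => setIntegral_mono (integrableOn_coshWeight n hr')
    (integrableOn_coshWeight n hr) fun s => coshWeight_antitone n s hle

lemma hasDerivAt_coshWeight (n : ℕ) (r s : ℝ) :
    HasDerivAt (fun r => coshWeight n r s) (-coshWeight (n + 1) r s) r := by
  have hexp : HasDerivAt (fun r => exp (-(r * cosh s))) (exp (-(r * cosh s)) * -(1 * cosh s)) r :=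
    ((hasDerivAt_id r).mul_const (cosh s)).neg.exp
  exact (hexp.mul_const (cosh s ^ n)).congr_deriv (by unfold coshWeight; ring)

lemma hasDerivAt_coshMoment (n : ℕ) (hr : 0 < r) :
    HasDerivAt (coshMoment n) (-coshMoment (n + 1) r) r := by
  have hdom := hasDerivAt_integral_of_dominated_loc_of_deriv_le (𝕜 := ℝ)
    (μ := volume.restrict (Ioi 0)) (F := coshWeight n)
    (F' := fun r s => -coshWeight (n + 1) r s) (bound := coshWeight (n + 1) (r / 2))
    (Ioi_mem_nhds (half_lt_self hr))
    (Eventually.of_forall fun x => (continuous_coshWeight n x).aestronglyMeasurable)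
    (integrableOn_coshWeight n hr) (continuous_coshWeight (n + 1) r).neg.aestronglyMeasurable
    (ae_of_all _ fun s x (hx : r / 2 < x) => by
      rw [norm_neg, norm_of_nonneg (coshWeight_pos _ x s).le]
      exact coshWeight_antitone (n + 1) s hx.le)
    (integrableOn_coshWeight (n + 1) (half_pos hr))
    (ae_of_all _ fun s x _ => hasDerivAt_coshWeight n x s)
  exact hdom.2.congr_deriv (MeasureTheory.integral_neg _)

-- Bessel's equation `K₀'' + K₀' / r = K₀`, by integrating `(e^{-r cosh s} sinh s)'` over `s > 0`.
lemma coshMoment_two_sub_coshMoment_one_div (hr : 0 < r) :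
    coshMoment 2 r - coshMoment 1 r / r = coshMoment 0 r := by
  have h0 := integrableOn_coshWeight 0 hr
  have h1 := integrableOn_coshWeight 1 hr
  have h2 := integrableOn_coshWeight 2 hr
  have h20 : IntegrableOn (fun s => r * (coshWeight 2 r s - coshWeight 0 r s)) (Ioi 0) :=
    (h2.sub h0).const_mul r
  have hderiv (s : ℝ) : HasDerivAt (fun s => exp (-(r * cosh s)) * sinh s)
      (coshWeight 1 r s - r * (coshWeight 2 r s - coshWeight 0 r s)) s :=
    ((((hasDerivAt_cosh s).const_mul r).fun_neg.exp.fun_mul (hasDerivAt_sinh s))).congr_deriv (by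
      simp only [coshWeight, cosh_sq]; ring)
  have hlim : Tendsto (fun s => exp (-(r * cosh s)) * sinh s) atTop (𝓝 0) := by
    refine squeeze_zero' ?_ (Eventually.of_forall fun s => ?_) (tendsto_coshWeight_atTop 1 hr)
    · filter_upwards [eventually_ge_atTop 0] with s hs
      exact mul_nonneg (exp_pos _).le (sinh_nonneg_iff.2 hs)
    · rw [coshWeight, pow_one]
      exact mul_le_mul_of_nonneg_left (sinh_lt_cosh s).le (exp_pos _).le
  have hzero := integral_Ioi_of_hasDerivAt_of_tendsto' (a := 0) (fun s _ => hderiv s)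
    (h1.sub h20) hlim
  rw [MeasureTheory.integral_sub h1 h20, MeasureTheory.integral_const_mul,
    MeasureTheory.integral_sub h2 h0] at hzero
  simp only [sinh_zero, mul_zero, sub_zero] at hzero
  change coshMoment 1 r - r * (coshMoment 2 r - coshMoment 0 r) = 0 at hzero
  field_simp
  linarith

end CoshMoment

section Radius

/-- The Euclidean norm of `(x, y)`, the argument of the Bessel functions. -/
noncomputable def radius (x y : ℝ) : ℝ := √(x ^ 2 + y ^ 2)

lemma sq_radius (x y : ℝ) : radius x y ^ 2 = x ^ 2 + y ^ 2 := sq_sqrt (by positivity)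

lemma abs_left_le_radius (x y : ℝ) : |x| ≤ radius x y := abs_le_sqrt (by nlinarith [sq_nonneg y])

lemma abs_right_le_radius (x y : ℝ) : |y| ≤ radius x y := abs_le_sqrt (by nlinarith [sq_nonneg x])

lemma radius_mul {c : ℝ} (hc : 0 ≤ c) (x y : ℝ) : radius (c * x) (c * y) = c * radius x y := by
  rw [radius, radius, mul_pow, mul_pow, ← mul_add, sqrt_mul (by positivity), sqrt_sq hc]

lemma continuous_radius (x : ℝ) : Continuous (radius x) := by
  unfold radius
  fun_prop

variable {x : ℝ}

lemma le_radius (x y : ℝ) : x ≤ radius x y := (le_abs_self x).trans (abs_left_le_radius x y)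

lemma radius_pos (hx : 0 < x) (y : ℝ) : 0 < radius x y := hx.trans_le (le_radius x y)

lemma radius_add_pos (hx : 0 < x) (y : ℝ) : 0 < radius x y + y :=
  neg_lt_iff_pos_add.1 <| lt_sqrt_of_sq_lt <|
    (neg_sq y).trans_lt (lt_add_of_pos_left _ (pow_pos hx 2))

lemma div_radius_le_one (hx : 0 < x) (y : ℝ) : x / radius x y ≤ 1 :=
  (div_le_one (radius_pos hx y)).2 (le_radius x y)

lemma abs_div_radius_le_one (hx : 0 < x) (y : ℝ) : |y / radius x y| ≤ 1 := by
  rw [abs_div, abs_of_pos (radius_pos hx y)]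
  exact (div_le_one (radius_pos hx y)).2 (abs_right_le_radius x y)

lemma hasDerivAt_radius_left (hx : 0 < x) (y : ℝ) :
    HasDerivAt (fun x => radius x y) (x / radius x y) x := by
  have hsq : HasDerivAt (fun x => x ^ 2 + y ^ 2) (2 * x) x := by
    simpa using (hasDerivAt_pow 2 x).add_const (y ^ 2)
  exact (hsq.sqrt (by positivity)).congr_deriv (mul_div_mul_left _ _ two_ne_zero)

lemma hasDerivAt_radius_right (hx : 0 < x) (y : ℝ) :
    HasDerivAt (fun y => radius x y) (y / radius x y) y := by
  have hsq : HasDerivAt (fun y => x ^ 2 + y ^ 2) (2 * y) y := by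
    simpa using (hasDerivAt_pow 2 y).const_add (x ^ 2)
  exact (hsq.sqrt (by positivity)).congr_deriv (mul_div_mul_left _ _ two_ne_zero)

end Radius

section TiltedMoment

/-- The functions `e^{-y} Mₙ(√(x² + y²))`, with `Mₙ` the `n`-th `coshMoment`, in terms of which the
Green function and all its derivatives are expressed. -/
noncomputable def tiltedMoment (n : ℕ) (x y : ℝ) : ℝ := exp (-y) * coshMoment n (radius x y)

variable {x : ℝ}

lemma tiltedMoment_pos (n : ℕ) (hx : 0 < x) (y : ℝ) : 0 < tiltedMoment n x y :=
  mul_pos (exp_pos _) (coshMoment_pos n (radius_pos hx y))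

lemma tiltedMoment_le_succ (n : ℕ) (hx : 0 < x) (y : ℝ) :
    tiltedMoment n x y ≤ tiltedMoment (n + 1) x y :=
  mul_le_mul_of_nonneg_left (coshMoment_le_succ n (radius_pos hx y)) (exp_pos _).le

lemma tiltedMoment_two_sub_tiltedMoment_one_div (hx : 0 < x) (y : ℝ) :
    tiltedMoment 2 x y - tiltedMoment 1 x y / radius x y = tiltedMoment 0 x y := by
  simp only [tiltedMoment, ← coshMoment_two_sub_coshMoment_one_div (radius_pos hx y)]
  ring

lemma hasDerivAt_tiltedMoment_left (n : ℕ) (hx : 0 < x) (y : ℝ) :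
    HasDerivAt (fun x => tiltedMoment n x y)
      (-(x / radius x y * tiltedMoment (n + 1) x y)) x := by
  have hcomp := (hasDerivAt_coshMoment n (radius_pos hx y)).comp x (hasDerivAt_radius_left hx y)
  exact (hcomp.const_mul (exp (-y))).congr_deriv (by unfold tiltedMoment; ring)

lemma hasDerivAt_tiltedMoment_right (n : ℕ) (hx : 0 < x) (y : ℝ) :
    HasDerivAt (tiltedMoment n x)
      (-tiltedMoment n x y - y / radius x y * tiltedMoment (n + 1) x y) y := by
  have hcomp := (hasDerivAt_coshMoment n (radius_pos hx y)).comp y (hasDerivAt_radius_right hx y)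
  exact ((hasDerivAt_neg y).exp.mul hcomp).congr_deriv (by
    simp only [tiltedMoment, Function.comp_apply]; ring)

lemma continuous_tiltedMoment (n : ℕ) (hx : 0 < x) : Continuous (tiltedMoment n x) :=
  continuous_iff_continuousAt.2 fun y => (hasDerivAt_tiltedMoment_right n hx y).continuousAt

lemma exists_tiltedMoment_sq_le (n : ℕ) {a : ℝ} (ha : 0 < a) :
    ∃ C : ℝ, 0 ≤ C ∧ ∀ x, a ≤ x → ∀ y,
      tiltedMoment n x y ^ 2 ≤ C * exp (-(2 * (radius x y + y))) / radius x y := by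
  obtain ⟨C, hC⟩ := exists_coshMoment_le n ha
  refine ⟨C ^ 2, sq_nonneg C, fun x hx y => ?_⟩
  have hR := radius_pos (ha.trans_le hx) y
  have hle : tiltedMoment n x y ≤ exp (-y) * (C * exp (-radius x y) / √(radius x y)) :=
    mul_le_mul_of_nonneg_left (hC _ (hx.trans (le_radius x y))) (exp_pos _).le
  calc tiltedMoment n x y ^ 2
      ≤ (exp (-y) * (C * exp (-radius x y) / √(radius x y))) ^ 2 :=
        pow_le_pow_left₀ (tiltedMoment_pos n (ha.trans_le hx) y).le hle 2
    _ = C ^ 2 * (exp (-y) * exp (-radius x y)) ^ 2 / √(radius x y) ^ 2 := by ring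
    _ = C ^ 2 * exp (-(2 * (radius x y + y))) / radius x y := by
        rw [sq_sqrt hR.le, ← exp_add, ← exp_nat_mul]
        ring_nf

lemma exists_tiltedMoment_sq_le_div_radius (n : ℕ) {a : ℝ} (ha : 0 < a) :
    ∃ C : ℝ, 0 ≤ C ∧ ∀ x, a ≤ x → ∀ y, tiltedMoment n x y ^ 2 ≤ C / radius x y := by
  obtain ⟨C, hC0, hC⟩ := exists_tiltedMoment_sq_le n ha
  refine ⟨C, hC0, fun x hx y => (hC x hx y).trans ?_⟩
  have hexp : exp (-(2 * (radius x y + y))) ≤ 1 :=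
    exp_le_one_iff.2 (by linarith [radius_add_pos (ha.trans_le hx) y])
  have hR := radius_pos (ha.trans_le hx) y
  gcongr
  exact mul_le_of_le_one_right hC0 hexp

lemma exists_tiltedMoment_sq_div_radius_le (n : ℕ) {a : ℝ} (ha : 0 < a) :
    ∃ C : ℝ, 0 ≤ C ∧ ∀ x, a ≤ x → ∀ y,
      tiltedMoment n x y ^ 2 / radius x y ≤ C * (a ^ 2 + y ^ 2)⁻¹ := by
  obtain ⟨C, hC0, hC⟩ := exists_tiltedMoment_sq_le_div_radius n ha
  refine ⟨C, hC0, fun x hx y => ?_⟩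
  have hR := radius_pos (ha.trans_le hx) y
  calc tiltedMoment n x y ^ 2 / radius x y ≤ C / radius x y / radius x y := by
        gcongr
        exact hC x hx y
    _ = C * (x ^ 2 + y ^ 2)⁻¹ := by rw [← sq_radius, div_div, ← sq, div_eq_mul_inv]
    _ ≤ C * (a ^ 2 + y ^ 2)⁻¹ := by gcongr

lemma tendsto_tiltedMoment_sq {l : Filter ℝ} (n : ℕ) (hx : 0 < x)
    (hl : Tendsto (fun y : ℝ => |y|) l atTop) :
    Tendsto (fun y => tiltedMoment n x y ^ 2) l (𝓝 0) := by
  obtain ⟨C, -, hC⟩ := exists_tiltedMoment_sq_le_div_radius n hx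
  exact squeeze_zero (fun y => sq_nonneg _) (hC x le_rfl)
    ((tendsto_atTop_mono (abs_right_le_radius x) hl).const_div_atTop C)

lemma integrable_of_abs_le_tiltedMoment_sq {F : ℝ → ℝ} {n : ℕ} {K : ℝ} (hx : 0 < x)
    (hF : Continuous F) (hK : 0 ≤ K)
    (hle : ∀ y, |F y| ≤ K * (tiltedMoment n x y ^ 2 / radius x y)) : Integrable F := by
  obtain ⟨C, -, hC⟩ := exists_tiltedMoment_sq_div_radius_le n hx
  exact (((integrable_inv_sq_add_sq hx.ne').const_mul C).const_mul K).mono'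
    hF.aestronglyMeasurable
    (ae_of_all _ fun y => (hle y).trans (mul_le_mul_of_nonneg_left (hC x le_rfl y) hK))

lemma abs_mul_le_tiltedMoment_sq {F G k m : ℝ} {n : ℕ} {y : ℝ}
    (hF : |F| ≤ k / radius x y * tiltedMoment n x y) (hG : |G| ≤ m * tiltedMoment n x y) :
    |F * G| ≤ m * k * (tiltedMoment n x y ^ 2 / radius x y) := by
  rw [abs_mul]
  exact (mul_le_mul hF hG (abs_nonneg _) ((abs_nonneg _).trans hF)).trans_eq (by ring)

lemma integrableOn_tiltedMoment_Ioi (n : ℕ) (hx : 0 < x) (a : ℝ) :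
    IntegrableOn (tiltedMoment n x) (Ioi a) := by
  refine ((integrableOn_exp_neg_Ioi a).mul_const (coshMoment n x)).mono'
    (continuous_tiltedMoment n hx).aestronglyMeasurable (ae_of_all _ fun y => ?_)
  rw [norm_of_nonneg (tiltedMoment_pos n hx y).le]
  exact mul_le_mul_of_nonneg_left (coshMoment_antitoneOn n hx (radius_pos hx y) (le_radius x y))
    (exp_pos _).le

end TiltedMoment

section Green

/-- `∂ₓw` for the Green function `w = 2πG⁰ = e^{-y} K₀(√(x² + y²))`, freed of its normalisation and
of the shift by `t`. -/
noncomputable def greenDx (x y : ℝ) : ℝ := -(x / radius x y * tiltedMoment 1 x y)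

/-- `∂_y w + 2w` for `w = 2πG⁰`, the `y`-component of the flux `∇w + 2w e_y`, which is
divergence-free because `Δw + 2∂_y w = 0`. -/
noncomputable def greenFlux (x y : ℝ) : ℝ :=
  tiltedMoment 0 x y - y / radius x y * tiltedMoment 1 x y

/-- The common value of `∂ₓ greenDx` and `-∂_y greenFlux`. -/
noncomputable def greenDxx (x y : ℝ) : ℝ :=
  (x / radius x y) ^ 2 * tiltedMoment 2 x y -
    (y / radius x y) ^ 2 / radius x y * tiltedMoment 1 x y

/-- The common value of `∂ₓ greenFlux` and `∂_y greenDx + 2 greenDx`. -/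
noncomputable def greenFluxDx (x y : ℝ) : ℝ :=
  x / radius x y * (y / radius x y * tiltedMoment 2 x y +
    (y / radius x y / radius x y - 1) * tiltedMoment 1 x y)

variable {x : ℝ}

lemma hasDerivAt_greenDx_left (hx : 0 < x) (y : ℝ) :
    HasDerivAt (fun x => greenDx x y) (greenDxx x y) x := by
  have hR := radius_pos hx y
  refine (((hasDerivAt_id x).fun_div (hasDerivAt_radius_left hx y) hR.ne').fun_mul
    (hasDerivAt_tiltedMoment_left 1 hx y)).fun_neg.congr_deriv ?_
  simp only [id, greenDxx]
  field_simp
  linear_combination -(tiltedMoment 1 x y) * sq_radius x y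

lemma hasDerivAt_greenDx_right (hx : 0 < x) (y : ℝ) :
    HasDerivAt (greenDx x) (greenFluxDx x y - 2 * greenDx x y) y := by
  have hR := radius_pos hx y
  refine (((hasDerivAt_const y x).fun_div (hasDerivAt_radius_right hx y) hR.ne').fun_mul
    (hasDerivAt_tiltedMoment_right 1 hx y)).fun_neg.congr_deriv ?_
  simp only [greenFluxDx, greenDx]
  field_simp
  ring

lemma hasDerivAt_greenFlux_left (hx : 0 < x) (y : ℝ) :
    HasDerivAt (fun x => greenFlux x y) (greenFluxDx x y) x := by
  have hR := radius_pos hx y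
  refine ((hasDerivAt_tiltedMoment_left 0 hx y).fun_sub (((hasDerivAt_const x y).fun_div
    (hasDerivAt_radius_left hx y) hR.ne').fun_mul
    (hasDerivAt_tiltedMoment_left 1 hx y))).congr_deriv ?_
  simp only [greenFluxDx]
  field_simp
  ring

lemma hasDerivAt_greenFlux_right (hx : 0 < x) (y : ℝ) :
    HasDerivAt (greenFlux x) (-greenDxx x y) y := by
  have hR := radius_pos hx y
  refine ((hasDerivAt_tiltedMoment_right 0 hx y).fun_sub (((hasDerivAt_id y).fun_div
    (hasDerivAt_radius_right hx y) hR.ne').fun_mul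
    (hasDerivAt_tiltedMoment_right 1 hx y))).congr_deriv ?_
  simp only [id, greenDxx, ← tiltedMoment_two_sub_tiltedMoment_one_div hx y]
  field_simp
  linear_combination (-(radius x y * tiltedMoment 2 x y)) * sq_radius x y

lemma continuous_greenDx (hx : 0 < x) : Continuous (greenDx x) :=
  continuous_iff_continuousAt.2 fun y => (hasDerivAt_greenDx_right hx y).continuousAt

lemma continuous_greenFlux (hx : 0 < x) : Continuous (greenFlux x) :=
  continuous_iff_continuousAt.2 fun y => (hasDerivAt_greenFlux_right hx y).continuousAt

lemma continuous_greenDxx (hx : 0 < x) : Continuous (greenDxx x) := by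
  have := continuous_radius x
  have := fun n => continuous_tiltedMoment n hx
  have := fun y => (radius_pos hx y).ne'
  unfold greenDxx
  fun_prop (disch := assumption)

lemma continuous_greenFluxDx (hx : 0 < x) : Continuous (greenFluxDx x) := by
  have := continuous_radius x
  have := fun n => continuous_tiltedMoment n hx
  have := fun y => (radius_pos hx y).ne'
  unfold greenFluxDx
  fun_prop (disch := assumption)

lemma greenDx_neg (hx : 0 < x) (y : ℝ) : greenDx x y < 0 :=
  neg_neg_of_pos (mul_pos (div_pos hx (radius_pos hx y)) (tiltedMoment_pos 1 hx y))

lemma abs_greenDx (hx : 0 < x) (y : ℝ) : |greenDx x y| = x / radius x y * tiltedMoment 1 x y := by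
  rw [abs_of_neg (greenDx_neg hx y), greenDx, neg_neg]

lemma abs_greenDx_le (hx : 0 < x) (y : ℝ) :
    |greenDx x y| ≤ x / radius x y * tiltedMoment 2 x y := by
  rw [abs_greenDx hx]
  exact mul_le_mul_of_nonneg_left (tiltedMoment_le_succ 1 hx y) (div_pos hx (radius_pos hx y)).le

lemma abs_greenDx_le_two_mul (hx : 0 < x) (y : ℝ) : |greenDx x y| ≤ 2 * tiltedMoment 2 x y :=
  (abs_greenDx_le hx y).trans (mul_le_mul_of_nonneg_right
    ((div_radius_le_one hx y).trans one_le_two) (tiltedMoment_pos 2 hx y).le)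

lemma abs_greenFlux_le (hx : 0 < x) (y : ℝ) : |greenFlux x y| ≤ 2 * tiltedMoment 2 x y := by
  have h1 := tiltedMoment_pos 1 hx y
  calc |greenFlux x y| ≤ |tiltedMoment 0 x y| + |y / radius x y * tiltedMoment 1 x y| := abs_sub _ _
    _ ≤ tiltedMoment 0 x y + 1 * tiltedMoment 1 x y := by
        rw [abs_mul, abs_of_pos h1, abs_of_pos (tiltedMoment_pos 0 hx y)]
        gcongr
        exact abs_div_radius_le_one hx y
    _ ≤ 2 * tiltedMoment 2 x y := by
        linarith [tiltedMoment_le_succ 0 hx y, tiltedMoment_le_succ 1 hx y]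

lemma abs_greenDxx_le (hx : 0 < x) (y : ℝ) :
    |greenDxx x y| ≤ (x + 1) / radius x y * tiltedMoment 2 x y := by
  have hR := radius_pos hx y
  have h1 := tiltedMoment_pos 1 hx y
  have h2 := tiltedMoment_pos 2 hx y
  have hxR : 0 ≤ x / radius x y := by positivity
  calc |greenDxx x y|
      ≤ |(x / radius x y) ^ 2 * tiltedMoment 2 x y| +
        |(y / radius x y) ^ 2 / radius x y * tiltedMoment 1 x y| := abs_sub _ _
    _ = (x / radius x y) ^ 2 * tiltedMoment 2 x y +
        (y / radius x y) ^ 2 / radius x y * tiltedMoment 1 x y := by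
        rw [abs_of_nonneg (by positivity), abs_of_nonneg (by positivity)]
    _ ≤ x / radius x y * tiltedMoment 2 x y + 1 / radius x y * tiltedMoment 2 x y := by
        gcongr
        · exact pow_le_of_le_one hxR (div_radius_le_one hx y) two_ne_zero
        · exact (sq_le_one_iff_abs_le_one _).2 (abs_div_radius_le_one hx y)
        · exact tiltedMoment_le_succ 1 hx y
    _ = _ := by ring

lemma abs_greenFluxDx_le (hx : 0 < x) (y : ℝ) :
    |greenFluxDx x y| ≤ (2 * x + 1) / radius x y * tiltedMoment 2 x y := by
  have hR := radius_pos hx y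
  have h1 := tiltedMoment_pos 1 hx y
  have h2 := tiltedMoment_pos 2 hx y
  have hxR : 0 ≤ x / radius x y := by positivity
  have hyR := abs_div_radius_le_one hx y
  calc |greenFluxDx x y|
      ≤ x / radius x y * (1 * tiltedMoment 2 x y +
          (1 / radius x y + 1) * tiltedMoment 1 x y) := by
        rw [greenFluxDx, abs_mul, abs_of_nonneg hxR]
        refine mul_le_mul_of_nonneg_left ((abs_add_le _ _).trans ?_) hxR
        rw [abs_mul, abs_mul, abs_of_pos h1, abs_of_pos h2]
        gcongr
        refine (abs_sub _ _).trans ?_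
        rw [abs_div _ (radius x y), abs_of_pos hR, abs_one]
        gcongr
    _ ≤ x / radius x y * (2 * tiltedMoment 2 x y) +
          x / radius x y * (1 / radius x y * tiltedMoment 2 x y) := by
        rw [← mul_add]
        have := tiltedMoment_le_succ 1 hx y
        have : 1 / radius x y * tiltedMoment 1 x y ≤ 1 / radius x y * tiltedMoment 2 x y := by
          gcongr
        refine mul_le_mul_of_nonneg_left ?_ hxR
        linarith
    _ ≤ x / radius x y * (2 * tiltedMoment 2 x y) +
          1 * (1 / radius x y * tiltedMoment 2 x y) := by
        gcongr
        exact div_radius_le_one hx y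
    _ = _ := by ring

lemma integrable_greenDx_sq (hx : 0 < x) : Integrable fun y => greenDx x y ^ 2 := by
  simp only [sq]
  exact integrable_of_abs_le_tiltedMoment_sq hx
    ((continuous_greenDx hx).mul (continuous_greenDx hx)) (by positivity) fun y =>
    abs_mul_le_tiltedMoment_sq (abs_greenDx_le hx y) (abs_greenDx_le_two_mul hx y)

lemma integrable_greenDx_mul_greenFlux (hx : 0 < x) :
    Integrable fun y => greenDx x y * greenFlux x y :=
  integrable_of_abs_le_tiltedMoment_sq hx ((continuous_greenDx hx).mul (continuous_greenFlux hx))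
    (by positivity) fun y =>
    abs_mul_le_tiltedMoment_sq (abs_greenDx_le hx y) (abs_greenFlux_le hx y)

lemma integrableOn_greenDx_Ioi (hx : 0 < x) (a : ℝ) : IntegrableOn (greenDx x) (Ioi a) :=
  ((integrableOn_tiltedMoment_Ioi 2 hx a).const_mul 2).mono'
    (continuous_greenDx hx).aestronglyMeasurable (ae_of_all _ (abs_greenDx_le_two_mul hx))

lemma hasDerivAt_greenDx_mul_greenFlux (hx : 0 < x) (y : ℝ) :
    HasDerivAt (fun x => greenDx x y * greenFlux x y)
      (greenDxx x y * greenFlux x y + greenDx x y * greenFluxDx x y) x :=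
  (hasDerivAt_greenDx_left hx y).fun_mul (hasDerivAt_greenFlux_left hx y)

lemma continuous_deriv_greenDx_mul_greenFlux (hx : 0 < x) :
    Continuous fun y => greenDxx x y * greenFlux x y + greenDx x y * greenFluxDx x y :=
  ((continuous_greenDxx hx).mul (continuous_greenFlux hx)).add
    ((continuous_greenDx hx).mul (continuous_greenFluxDx hx))

lemma abs_deriv_greenDx_mul_greenFlux_le (hx : 0 < x) (y : ℝ) :
    |greenDxx x y * greenFlux x y + greenDx x y * greenFluxDx x y| ≤
      (6 * x + 4) * (tiltedMoment 2 x y ^ 2 / radius x y) := by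
  have hDxx := abs_mul_le_tiltedMoment_sq (abs_greenDxx_le hx y) (abs_greenFlux_le hx y)
  have hFlux := abs_mul_le_tiltedMoment_sq (abs_greenFluxDx_le hx y) (abs_greenDx_le_two_mul hx y)
  rw [mul_comm (greenDx x y)]
  exact (abs_add_le _ _).trans ((add_le_add hDxx hFlux).trans_eq (by ring))

lemma integrable_deriv_greenDx_mul_greenFlux (hx : 0 < x) :
    Integrable fun y => greenDxx x y * greenFlux x y + greenDx x y * greenFluxDx x y :=
  integrable_of_abs_le_tiltedMoment_sq hx (continuous_deriv_greenDx_mul_greenFlux hx)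
    (by positivity) (abs_deriv_greenDx_mul_greenFlux_le hx)

lemma tendsto_greenDx_sq_sub_greenFlux_sq {l : Filter ℝ} (hx : 0 < x)
    (hl : Tendsto (fun y : ℝ => |y|) l atTop) :
    Tendsto (fun y => (greenDx x y ^ 2 - greenFlux x y ^ 2) / 2) l (𝓝 0) := by
  have hT := (tendsto_tiltedMoment_sq 2 hx hl).const_mul 4
  rw [mul_zero] at hT
  refine squeeze_zero_norm (fun y => ?_) hT
  have hA := sq_le_sq' (abs_le.1 (abs_greenDx_le_two_mul hx y)).1
    (abs_le.1 (abs_greenDx_le_two_mul hx y)).2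
  have hB := sq_le_sq' (abs_le.1 (abs_greenFlux_le hx y)).1 (abs_le.1 (abs_greenFlux_le hx y)).2
  rw [norm_eq_abs, abs_le]
  constructor <;> nlinarith [sq_nonneg (greenDx x y), sq_nonneg (greenFlux x y)]

-- The integrand is `2 greenDx²` plus the `y`-derivative of `(greenDx² - greenFlux²) / 2`.
lemma integral_deriv_greenDx_mul_greenFlux (hx : 0 < x) :
    ∫ y, (greenDxx x y * greenFlux x y + greenDx x y * greenFluxDx x y) =
      2 * ∫ y, greenDx x y ^ 2 := by
  have hderiv (y : ℝ) : HasDerivAt (fun y => (greenDx x y ^ 2 - greenFlux x y ^ 2) / 2)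
      (greenDxx x y * greenFlux x y + greenDx x y * greenFluxDx x y - 2 * greenDx x y ^ 2) y :=
    ((((hasDerivAt_greenDx_right hx y).fun_pow 2).fun_sub
      ((hasDerivAt_greenFlux_right hx y).fun_pow 2)).div_const 2).congr_deriv (by ring)
  have hint := (integrable_greenDx_sq hx).const_mul 2
  have hzero := integral_of_hasDerivAt_of_tendsto hderiv
    ((integrable_deriv_greenDx_mul_greenFlux hx).sub hint)
    (tendsto_greenDx_sq_sub_greenFlux_sq hx tendsto_abs_atBot_atTop)
    (tendsto_greenDx_sq_sub_greenFlux_sq hx tendsto_abs_atTop_atTop)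
  rw [MeasureTheory.integral_sub (integrable_deriv_greenDx_mul_greenFlux hx) hint,
    MeasureTheory.integral_const_mul, sub_zero] at hzero
  exact sub_eq_zero.1 hzero

/-- `∫ ∂ₓw (∂_y w + 2w) dy` along the vertical line at abscissa `x`, with `w = 2πG⁰`. -/
noncomputable def fluxPairing (x : ℝ) : ℝ := ∫ y, greenDx x y * greenFlux x y

lemma hasDerivAt_fluxPairing (hx : 0 < x) :
    HasDerivAt fluxPairing (2 * ∫ y, greenDx x y ^ 2) x := by
  have hx2 := half_pos hx
  obtain ⟨C, -, hC⟩ := exists_tiltedMoment_sq_div_radius_le 2 hx2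
  have hdom := hasDerivAt_integral_of_dominated_loc_of_deriv_le (𝕜 := ℝ) (μ := volume)
    (F := fun x y => greenDx x y * greenFlux x y)
    (F' := fun x y => greenDxx x y * greenFlux x y + greenDx x y * greenFluxDx x y)
    (bound := fun y => (6 * (2 * x) + 4) * (C * ((x / 2) ^ 2 + y ^ 2)⁻¹))
    (Ioo_mem_nhds (half_lt_self hx) (by linarith : x < 2 * x))
    ((eventually_gt_nhds hx).mono fun x' hx' =>
      (integrable_greenDx_mul_greenFlux hx').aestronglyMeasurable)
    (integrable_greenDx_mul_greenFlux hx)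
    (integrable_deriv_greenDx_mul_greenFlux hx).aestronglyMeasurable
    (ae_of_all _ fun y x' hx' => by
      have hx'0 := hx2.trans hx'.1
      have hR := radius_pos hx'0 y
      refine (abs_deriv_greenDx_mul_greenFlux_le hx'0 y).trans ?_
      gcongr
      · exact hx'.2.le
      · exact hC x' hx'.1.le y)
    (((integrable_inv_sq_add_sq hx2.ne').const_mul C).const_mul _)
    (ae_of_all _ fun y x' hx' => hasDerivAt_greenDx_mul_greenFlux (hx2.trans hx'.1) y)
  exact hdom.2.congr_deriv (integral_deriv_greenDx_mul_greenFlux hx)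

lemma fluxPairing_eq_integral_rescaled (hx : 0 < x) :
    fluxPairing x = ∫ v, x * (greenDx x (x * v) * greenFlux x (x * v)) := by
  rw [MeasureTheory.integral_const_mul,
    Measure.integral_comp_mul_left (fun y => greenDx x y * greenFlux x y), smul_eq_mul,
    abs_of_pos (inv_pos.2 hx), mul_inv_cancel_left₀ hx.ne', fluxPairing]

lemma exists_abs_rescaled_le :
    ∃ C : ℝ, 0 ≤ C ∧ ∀ x, 1 ≤ x → ∀ v, |x * (greenDx x (x * v) * greenFlux x (x * v))| ≤
      C * exp (-(2 * (x * (radius 1 v + v)))) * (1 + v ^ 2)⁻¹ := by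
  obtain ⟨C, hC0, hC⟩ := exists_tiltedMoment_sq_le 2 one_pos
  refine ⟨2 * C, by positivity, fun x hx1 v => ?_⟩
  have hx : 0 < x := one_pos.trans_le hx1
  have hr := radius_pos one_pos v
  have hscale : radius x (x * v) = x * radius 1 v := by simpa using radius_mul hx.le 1 v
  have hT := hC x hx1 (x * v)
  have hprod := abs_mul_le_tiltedMoment_sq (abs_greenDx_le hx (x * v)) (abs_greenFlux_le hx (x * v))
  rw [hscale] at hT hprod
  calc |x * (greenDx x (x * v) * greenFlux x (x * v))|
      ≤ x * (2 * x * (tiltedMoment 2 x (x * v) ^ 2 / (x * radius 1 v))) := by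
        rw [abs_mul, abs_of_pos hx]
        gcongr
    _ ≤ x * (2 * x * (C * exp (-(2 * (x * radius 1 v + x * v))) / (x * radius 1 v) /
          (x * radius 1 v))) := by gcongr
    _ = 2 * C * exp (-(2 * (x * (radius 1 v + v)))) * (radius 1 v ^ 2)⁻¹ := by
        rw [mul_add x]
        field_simp
    _ = _ := by rw [sq_radius, one_pow]

lemma tendsto_fluxPairing_atTop : Tendsto fluxPairing atTop (𝓝 0) := by
  obtain ⟨C, hC0, hC⟩ := exists_abs_rescaled_le
  have hlim := tendsto_integral_filter_of_dominated_convergence (μ := volume) (l := atTop)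
    (F := fun x v => x * (greenDx x (x * v) * greenFlux x (x * v))) (f := fun _ => 0)
    (fun v => C * (1 + v ^ 2)⁻¹) ?_ ?_ (integrable_inv_one_add_sq.const_mul C) ?_
  · rw [MeasureTheory.integral_zero] at hlim
    refine hlim.congr' ?_
    filter_upwards [eventually_gt_atTop 0] with x hx
    exact (fluxPairing_eq_integral_rescaled hx).symm
  · filter_upwards [eventually_gt_atTop 0] with x hx
    have := continuous_greenDx hx
    have := continuous_greenFlux hx
    exact Continuous.aestronglyMeasurable (by fun_prop)
  · filter_upwards [eventually_ge_atTop 1] with x hx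
    refine ae_of_all _ fun v => (hC x hx v).trans ?_
    have := radius_add_pos one_pos v
    have hexp : exp (-(2 * (x * (radius 1 v + v)))) ≤ 1 :=
      exp_le_one_iff.2 (neg_nonpos.2 (by positivity))
    gcongr
    exact mul_le_of_le_one_right hC0 hexp
  · refine ae_of_all _ fun v => squeeze_zero_norm' (a := fun x =>
      C * exp (-(2 * (x * (radius 1 v + v)))) * (1 + v ^ 2)⁻¹) ?_ ?_
    · filter_upwards [eventually_ge_atTop 1] with x hx using hC x hx v
    · have hexp : Tendsto (fun x => exp (-(2 * (x * (radius 1 v + v))))) atTop (𝓝 0) :=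
        tendsto_exp_neg_atTop_nhds_zero.comp ((tendsto_id.atTop_mul_const
          (radius_add_pos one_pos v)).const_mul_atTop two_pos)
      simpa using (hexp.const_mul C).mul_const (1 + v ^ 2)⁻¹

lemma integrableOn_integral_greenDx_sq {a : ℝ} (ha : 0 < a) :
    IntegrableOn (fun x => ∫ y, greenDx x y ^ 2) (Ioi a) := by
  have hint := integrableOn_Ioi_deriv_of_nonneg'
    (fun x (hx : a ≤ x) => hasDerivAt_fluxPairing (ha.trans_le hx))
    (fun x _ => by positivity) tendsto_fluxPairing_atTop
  exact (hint.const_mul (1 / 2)).congr (ae_of_all _ fun x => by ring)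

lemma integral_integral_greenDx_sq {a : ℝ} (ha : 0 < a) :
    ∫ x in Ioi a, ∫ y, greenDx x y ^ 2 = -fluxPairing a / 2 := by
  have hint := integral_Ioi_of_hasDerivAt_of_nonneg'
    (fun x (hx : a ≤ x) => hasDerivAt_fluxPairing (ha.trans_le hx))
    (fun x _ => by positivity) tendsto_fluxPairing_atTop
  rw [MeasureTheory.integral_const_mul] at hint
  linarith

lemma integral_integral_greenDx_sq_pos {a : ℝ} (ha : 0 < a) :
    0 < ∫ x in Ioi a, ∫ y, greenDx x y ^ 2 := by
  have : NeZero (volume.restrict (Ioi a)) := ⟨by simp⟩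
  refine integral_pos_of_ae_pos (integrableOn_integral_greenDx_sq ha) ?_
  filter_upwards [self_mem_ae_restrict measurableSet_Ioi] with x hx
  have hx0 := ha.trans hx
  exact integral_pos_of_ae_pos (integrable_greenDx_sq hx0)
    (ae_of_all _ fun y => sq_pos_of_neg (greenDx_neg hx0 y))

end Green

section Front

variable {t x : ℝ}

lemma Gt_eq_tiltedMoment (t x y : ℝ) : Gt t x y = (2 * π)⁻¹ * tiltedMoment 0 (x + t) y := by
  rw [Gt, K0_eq_coshMoment, tiltedMoment, radius]
  ring

lemma Pt_eq_greenDx (t x y : ℝ) : Pt t x y = -(greenDx (x + t) y / π) := by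
  rw [Pt, K1_eq_coshMoment, greenDx, tiltedMoment, radius]
  ring

lemma deriv_Gt_left (h : 0 < x + t) (y : ℝ) :
    deriv (fun x => Gt t x y) x = greenDx (x + t) y / (2 * π) := by
  simp only [Gt_eq_tiltedMoment]
  refine (((hasDerivAt_tiltedMoment_left 0 h y).comp_add_const x t).const_mul _).deriv.trans ?_
  rw [greenDx]
  ring

lemma deriv_Gt_right_add_two_mul (h : 0 < x + t) (y : ℝ) :
    deriv (fun y => Gt t x y) y + 2 * Gt t x y = greenFlux (x + t) y / (2 * π) := by
  simp only [Gt_eq_tiltedMoment]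
  rw [((hasDerivAt_tiltedMoment_right 0 h y).const_mul _).deriv, greenFlux]
  ring

lemma hasDerivAt_ut (h : 0 < x + t) (y : ℝ) :
    HasDerivAt (ut t x) (greenDx (x + t) y / π) y := by
  have hut : ut t x = fun y => ∫ z in Ioi y, -(greenDx (x + t) z / π) := by
    simp only [funext_iff, ut, Pt_eq_greenDx, implies_true]
  rw [hut]
  exact (hasDerivAt_integral_Ioi ((continuous_greenDx h).div_const π).neg
    (fun a => ((integrableOn_greenDx_Ioi h a).div_const π).neg) y).congr_deriv (neg_neg _)

lemma integral_integral_deriv_Gt_sq (ht : 0 ≤ t) :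
    ∫ x in Ioi 0, ∫ y, deriv (fun x' => Gt t x' y) x ^ 2 =
      (∫ x in Ioi t, ∫ y, greenDx x y ^ 2) / (2 * π) ^ 2 := by
  have hshift := integral_Ioi_comp_add_right (fun x => ∫ y, greenDx x y ^ 2) 0 t
  rw [zero_add] at hshift
  rw [← hshift, ← MeasureTheory.integral_div]
  refine setIntegral_congr_fun measurableSet_Ioi fun x (hx : 0 < x) => ?_
  simp only [deriv_Gt_left (add_pos_of_pos_of_nonneg hx ht), div_pow, MeasureTheory.integral_div]

end Front

/-- The nonlinearity `f^t`, implicitly defined on `[0,1]` by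
`f^t(u^t(0,y)) = 2(∂_y G^t + 2 G^t)(0,y)`, is positively balanced:
`∫₀¹ f^t(s) ds = 8 ∫_{ℝ²₊} (∂_x G^t)² dx dy > 0`. -/
theorem ft_positively_balanced (t : ℝ) (ht : 0 < t) (f : ℝ → ℝ)
    (hanti : StrictAnti (fun y : ℝ => ut t 0 y))
    (hlim1 : Tendsto (fun y : ℝ => ut t 0 y) atBot (nhds 1))
    (hlim0 : Tendsto (fun y : ℝ => ut t 0 y) atTop (nhds 0))
    (hf : ∀ y : ℝ, f (ut t 0 y) =
      2 * (deriv (fun y' => Gt t 0 y') y + 2 * Gt t 0 y)) :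
    (∫ s in (0 : ℝ)..1, f s) =
        8 * ∫ x in Set.Ioi (0 : ℝ), ∫ y : ℝ, (deriv (fun x' => Gt t x' y) x) ^ 2 ∧
      0 < ∫ x in Set.Ioi (0 : ℝ), ∫ y : ℝ, (deriv (fun x' => Gt t x' y) x) ^ 2 := by
  have ht0 : 0 < 0 + t := by rwa [zero_add]
  have hsubst : ∫ s in (0 : ℝ)..1, f s = -fluxPairing t / π ^ 2 := by
    rw [intervalIntegral_eq_integral_comp_of_antitone hanti.antitone (hasDerivAt_ut ht0) hlim1
      hlim0, fluxPairing, ← MeasureTheory.integral_neg, ← MeasureTheory.integral_div]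
    refine integral_congr_ae (ae_of_all _ fun y => ?_)
    simp only [hf, deriv_Gt_right_add_two_mul ht0, zero_add, smul_eq_mul]
    field_simp
  rw [hsubst, integral_integral_deriv_Gt_sq ht.le]
  refine ⟨?_, div_pos (integral_integral_greenDx_sq_pos ht) (by positivity)⟩
  rw [integral_integral_greenDx_sq ht]
  field_simp
  norm_num
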